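/- With sech t = 1/cosh t, Φₐ(y) = tanh(y)·sech²(y), and Φₛ(y) = (1/8)·(15·sech²(y) − 2·cosh²(y) − 5 − 15·y·tanh(y)·sech²(y)), define I(y) = 4·∫₀^y s²·Φₛ(s) ds and Φₚ⁽²⁾(y) = 2·( y·( y·sech²(y) − 2·tanh(y) ) − log(sech²(y)) )·Φₛ(y) + Φₐ(y)·I(y). Then v(y) = Φₚ⁽²⁾(y/√2) satisfies v''(y) + 2·(3·sech²(y/√2) − 1)·v(y) = y² for all y ∈ ℝ, and Φₚ⁽²⁾(0) = 0 and (Φₚ⁽²⁾)'(0) = 0. -/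

import Mathlib

/-- The hyperbolic secant. -/
noncomputable def sech (t : ℝ) : ℝ := 1 / Real.cosh t

/-- The antisymmetric complementary function. -/
noncomputable def Phi_a (y : ℝ) : ℝ := Real.tanh y * (sech y) ^ 2

/-- The symmetric complementary function. -/
noncomputable def Phi_s (y : ℝ) : ℝ :=
  (1/8) * (15 * (sech y) ^ 2 - 2 * (Real.cosh y) ^ 2 - 5
    - 15 * y * Real.tanh y * (sech y) ^ 2)

/-- The particular integral for right-hand side `y²`, vanishing with its derivative at `0`. -/
noncomputable def Phi_p2 (y : ℝ) : ℝ :=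
  2 * (y * (y * (sech y) ^ 2 - 2 * Real.tanh y) - Real.log ((sech y) ^ 2)) * Phi_s y
    + Phi_a y * (4 * ∫ s in (0:ℝ)..y, s ^ 2 * Phi_s s)

/-!
In the variable `y / √2` the equation becomes `u'' + 4 (3 sech² - 1) u = 4 y²`. The functions
`Phi_s` and `Phi_a` are homogeneous solutions, and Abel's identity gives their Wronskian the
constant value `1`, read off at the origin. Variation of parameters then asks for
`u = c_s Phi_s + c_a Phi_a` with `c_s' = -4 y² Phi_a` and `c_a' = 4 y² Phi_s`. The first of these
integrates in closed form. Taking both coefficients to vanish at `0` makes `u` and `u'` vanish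
there, because `u' = c_s Phi_s' + c_a Phi_a'`.
-/

section LinearODE

variable {𝕜 : Type*} [NontriviallyNormedField 𝕜]

/-- `u` is a solution on the whole line of the forced linear equation `u'' + q u = f`. The second
derivative is recorded through `HasDerivAt`, so that its existence is part of the notion. -/
structure IsLinearODESolution (q f u : 𝕜 → 𝕜) : Prop where
  differentiable : Differentiable 𝕜 u
  hasDerivAt_deriv (x : 𝕜) : HasDerivAt (deriv u) (f x - q x * u x) x

/-- The Wronskian `u v' - u' v`. -/
noncomputable def wronskian (u v : 𝕜 → 𝕜) (x : 𝕜) : 𝕜 := u x * deriv v x - deriv u x * v x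

namespace IsLinearODESolution

variable {q f g u u' v : 𝕜 → 𝕜}

lemma of_hasDerivAt (hu : ∀ x, HasDerivAt u (u' x) x)
    (hu' : ∀ x, HasDerivAt u' (f x - q x * u x) x) : IsLinearODESolution q f u where
  differentiable x := (hu x).differentiableAt
  hasDerivAt_deriv x := by rw [deriv_eq hu]; exact hu' x

lemma hasDerivAt (hu : IsLinearODESolution q f u) (x : 𝕜) : HasDerivAt u (deriv u x) x :=
  (hu.differentiable x).hasDerivAt

lemma deriv_deriv_add_mul (hu : IsLinearODESolution q f u) (x : 𝕜) :
    deriv (deriv u) x + q x * u x = f x := by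
  rw [(hu.hasDerivAt_deriv x).deriv, sub_add_cancel]

lemma comp_mul_left (hu : IsLinearODESolution q f u) (a : 𝕜) :
    IsLinearODESolution (fun x => a ^ 2 * q (a * x)) (fun x => a ^ 2 * f (a * x))
      (fun x => u (a * x)) := by
  have hscale (x : 𝕜) : HasDerivAt (fun x => a * x) a x := hasDerivAt_const_mul a
  refine of_hasDerivAt (u' := fun x => deriv u (a * x) * a)
    (fun x => (hu.hasDerivAt (a * x)).comp x (hscale x)) fun x => ?_
  refine (((hu.hasDerivAt_deriv (a * x)).comp x (hscale x)).mul_const a).congr_deriv ?_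
  ring

lemma hasDerivAt_wronskian (hu : IsLinearODESolution q f u) (hv : IsLinearODESolution q g v)
    (x : 𝕜) : HasDerivAt (wronskian u v) (u x * g x - f x * v x) x := by
  refine (((hu.hasDerivAt x).mul (hv.hasDerivAt_deriv x)).sub
    ((hu.hasDerivAt_deriv x).mul (hv.hasDerivAt x))).congr_deriv ?_
  ring

end IsLinearODESolution

lemma hasDerivAt_variation_of_parameters {u₁ u₂ c₁ c₂ : 𝕜 → 𝕜} {c₁' c₂' x : 𝕜}
    (hu₁ : DifferentiableAt 𝕜 u₁ x) (hu₂ : DifferentiableAt 𝕜 u₂ x)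
    (hc₁ : HasDerivAt c₁ c₁' x) (hc₂ : HasDerivAt c₂ c₂' x) (h : c₁' * u₁ x + c₂' * u₂ x = 0) :
    HasDerivAt (fun x => c₁ x * u₁ x + c₂ x * u₂ x) (c₁ x * deriv u₁ x + c₂ x * deriv u₂ x) x := by
  refine ((hc₁.mul hu₁.hasDerivAt).add (hc₂.mul hu₂.hasDerivAt)).congr_deriv ?_
  linear_combination h

theorem IsLinearODESolution.variation_of_parameters {q f u₁ u₂ c₁ c₂ c₁' c₂' : 𝕜 → 𝕜}
    (hu₁ : IsLinearODESolution q 0 u₁) (hu₂ : IsLinearODESolution q 0 u₂)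
    (hc₁ : ∀ x, HasDerivAt c₁ (c₁' x) x) (hc₂ : ∀ x, HasDerivAt c₂ (c₂' x) x)
    (h : ∀ x, c₁' x * u₁ x + c₂' x * u₂ x = 0)
    (h' : ∀ x, c₁' x * deriv u₁ x + c₂' x * deriv u₂ x = f x) :
    IsLinearODESolution q f (fun x => c₁ x * u₁ x + c₂ x * u₂ x) := by
  refine of_hasDerivAt (fun x => hasDerivAt_variation_of_parameters (hu₁.differentiable x)
    (hu₂.differentiable x) (hc₁ x) (hc₂ x) (h x)) fun x => ?_
  refine (((hc₁ x).mul (hu₁.hasDerivAt_deriv x)).add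
    ((hc₂ x).mul (hu₂.hasDerivAt_deriv x))).congr_deriv ?_
  simp only [Pi.zero_apply]
  linear_combination h' x

theorem IsLinearODESolution.wronskian_eq {𝕜 : Type*} [RCLike 𝕜] {q u v : 𝕜 → 𝕜}
    (hu : IsLinearODESolution q 0 u) (hv : IsLinearODESolution q 0 v) (x y : 𝕜) :
    wronskian u v x = wronskian u v y := by
  have hderiv (z : 𝕜) : HasDerivAt (wronskian u v) 0 z := by
    simpa using hu.hasDerivAt_wronskian hv z
  exact is_const_of_deriv_eq_zero (fun z => (hderiv z).differentiableAt)
    (fun z => (hderiv z).deriv) x y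

end LinearODE

section Sech

open Real

lemma sech_pos (y : ℝ) : 0 < sech y := one_div_pos.2 (cosh_pos y)

lemma sech_mul_cosh (y : ℝ) : sech y * cosh y = 1 := one_div_mul_cancel (cosh_pos y).ne'

@[simp]
lemma sech_zero : sech 0 = 1 := by simp [sech]

lemma tanh_sq_eq_one_sub_sech_sq (y : ℝ) : tanh y ^ 2 = 1 - sech y ^ 2 := by
  rw [tanh_eq_sinh_div_cosh, sech, div_pow, sinh_sq]
  field_simp [(cosh_pos y).ne']

lemma hasDerivAt_sech (y : ℝ) : HasDerivAt sech (-(sech y * tanh y)) y := by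
  refine ((hasDerivAt_const y 1).div (hasDerivAt_cosh y) (cosh_pos y).ne').congr_deriv ?_
  rw [sech, tanh_eq_sinh_div_cosh]
  ring

lemma hasDerivAt_tanh (y : ℝ) : HasDerivAt tanh (sech y ^ 2) y := by
  rw [funext tanh_eq_sinh_div_cosh]
  refine ((hasDerivAt_sinh y).div (hasDerivAt_cosh y) (cosh_pos y).ne').congr_deriv ?_
  rw [← sq, ← sq, cosh_sq_sub_sinh_sq, sech, one_div_pow]

lemma hasDerivAt_sech_sq (y : ℝ) : HasDerivAt (fun y => sech y ^ 2) (-2 * Phi_a y) y := by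
  refine ((hasDerivAt_sech y).pow 2).congr_deriv ?_
  rw [Phi_a]
  ring

end Sech

section HomogeneousSolutions

open Real

/-- The coefficient `4 (3 sech² - 1)` of the linearised equation in the variable `y / √2`. -/
noncomputable def sechPotential (y : ℝ) : ℝ := 4 * (3 * sech y ^ 2 - 1)

lemma hasDerivAt_Phi_a (y : ℝ) : HasDerivAt Phi_a (3 * sech y ^ 4 - 2 * sech y ^ 2) y := by
  refine ((hasDerivAt_tanh y).mul (hasDerivAt_sech_sq y)).congr_deriv ?_
  rw [Phi_a]
  linear_combination -2 * sech y ^ 2 * tanh_sq_eq_one_sub_sech_sq y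

theorem isLinearODESolution_Phi_a : IsLinearODESolution sechPotential 0 Phi_a := by
  refine .of_hasDerivAt hasDerivAt_Phi_a fun y => ?_
  refine ((((hasDerivAt_sech y).pow 4).const_mul 3).sub
    ((hasDerivAt_sech_sq y).const_mul 2)).congr_deriv ?_
  rw [Pi.zero_apply, sechPotential, Phi_a]
  ring

lemma hasDerivAt_Phi_s (y : ℝ) :
    HasDerivAt Phi_s
      (-(1 / 8) * (45 * Phi_a y + 4 * (sinh y * cosh y) + 15 * (y * deriv Phi_a y))) y := by
  have hPhi_s : Phi_s = fun y =>
      1 / 8 * (15 * sech y ^ 2 - 2 * cosh y ^ 2 - 5 - 15 * (y * Phi_a y)) := by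
    funext y
    rw [Phi_s, Phi_a]
    ring
  rw [hPhi_s]
  have hmul_Phi_a := (hasDerivAt_id y).mul (isLinearODESolution_Phi_a.hasDerivAt y)
  refine (((((hasDerivAt_sech_sq y).const_mul 15).sub
    (((hasDerivAt_cosh y).pow 2).const_mul 2)).sub_const 5).sub
      (hmul_Phi_a.const_mul 15)).const_mul (1 / 8) |>.congr_deriv ?_
  simp only [id]
  ring

theorem isLinearODESolution_Phi_s : IsLinearODESolution sechPotential 0 Phi_s := by
  refine .of_hasDerivAt hasDerivAt_Phi_s fun y => ?_
  have hmul_deriv_Phi_a := (hasDerivAt_id y).mul (isLinearODESolution_Phi_a.hasDerivAt_deriv y)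
  refine ((((isLinearODESolution_Phi_a.hasDerivAt y).const_mul 45).add
    (((hasDerivAt_sinh y).mul (hasDerivAt_cosh y)).const_mul 4)).add
      (hmul_deriv_Phi_a.const_mul 15)).const_mul (-(1 / 8)) |>.congr_deriv ?_
  have hsech_cosh : sech y ^ 2 * cosh y ^ 2 = 1 := by rw [← mul_pow, sech_mul_cosh, one_pow]
  simp only [Pi.zero_apply, id, (hasDerivAt_Phi_a y).deriv, sechPotential, Phi_s, Phi_a]
  linear_combination -3 * hsech_cosh + 1 / 2 * cosh_sq y

theorem wronskian_Phi_s_Phi_a (y : ℝ) : wronskian Phi_s Phi_a y = 1 := by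
  rw [isLinearODESolution_Phi_s.wronskian_eq isLinearODESolution_Phi_a y 0, wronskian,
    (hasDerivAt_Phi_a 0).deriv]
  norm_num [Phi_s, Phi_a]

end HomogeneousSolutions

section ParticularIntegral

open Real

/-- The coefficient of `Phi_s` in the particular integral `Phi_p2`, as produced by variation of
parameters: the primitive of `-4 y² Phi_a` that vanishes at `0`. -/
noncomputable def coeff_s (y : ℝ) : ℝ :=
  2 * (y * (y * sech y ^ 2 - 2 * tanh y) - log (sech y ^ 2))

/-- The coefficient of `Phi_a` in the particular integral `Phi_p2`, as produced by variation of
parameters: the primitive of `4 y² Phi_s` that vanishes at `0`. -/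
noncomputable def coeff_a (y : ℝ) : ℝ := 4 * ∫ s in (0 : ℝ)..y, s ^ 2 * Phi_s s

@[simp]
lemma coeff_s_zero : coeff_s 0 = 0 := by simp [coeff_s]

@[simp]
lemma coeff_a_zero : coeff_a 0 = 0 := by simp [coeff_a]

lemma Phi_p2_eq : Phi_p2 = fun y => coeff_s y * Phi_s y + coeff_a y * Phi_a y := by
  funext y
  rw [Phi_p2, coeff_s, coeff_a, mul_comm (Phi_a y)]

lemma hasDerivAt_log_sech_sq (y : ℝ) :
    HasDerivAt (fun y => log (sech y ^ 2)) (-2 * tanh y) y := by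
  have hsech : sech y ≠ 0 := (sech_pos y).ne'
  refine ((hasDerivAt_sech_sq y).log (pow_ne_zero 2 hsech)).congr_deriv ?_
  rw [Phi_a]
  field_simp

lemma hasDerivAt_coeff_s (y : ℝ) : HasDerivAt coeff_s (-(4 * y ^ 2) * Phi_a y) y := by
  refine (((hasDerivAt_id y).mul (((hasDerivAt_id y).mul (hasDerivAt_sech_sq y)).sub
    ((hasDerivAt_tanh y).const_mul 2))).sub (hasDerivAt_log_sech_sq y)).const_mul 2
    |>.congr_deriv ?_
  simp only [id, Pi.sub_apply, Pi.mul_apply]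
  ring

lemma hasDerivAt_coeff_a (y : ℝ) : HasDerivAt coeff_a (4 * y ^ 2 * Phi_s y) y := by
  have hcont : Continuous fun s => s ^ 2 * Phi_s s :=
    (continuous_pow 2).mul isLinearODESolution_Phi_s.differentiable.continuous
  rw [mul_assoc]
  exact (hcont.integral_hasStrictDerivAt 0 y).hasDerivAt.const_mul 4

theorem hasDerivAt_Phi_p2 (y : ℝ) :
    HasDerivAt Phi_p2 (coeff_s y * deriv Phi_s y + coeff_a y * deriv Phi_a y) y := by
  rw [Phi_p2_eq]
  exact hasDerivAt_variation_of_parameters (isLinearODESolution_Phi_s.differentiable y)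
    (isLinearODESolution_Phi_a.differentiable y) (hasDerivAt_coeff_s y) (hasDerivAt_coeff_a y)
    (by ring)

theorem isLinearODESolution_Phi_p2 :
    IsLinearODESolution sechPotential (fun y => 4 * y ^ 2) Phi_p2 := by
  rw [Phi_p2_eq]
  refine .variation_of_parameters isLinearODESolution_Phi_s isLinearODESolution_Phi_a
    hasDerivAt_coeff_s hasDerivAt_coeff_a (fun _ => by ring) fun y => ?_
  have hwronskian : Phi_s y * deriv Phi_a y - deriv Phi_s y * Phi_a y = 1 :=
    wronskian_Phi_s_Phi_a y
  linear_combination 4 * y ^ 2 * hwronskian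

end ParticularIntegral

/-- `v(y) = Φₚ⁽²⁾(y/√2)` is a particular integral of the linearised equation with
right-hand side `y²`, and `Φₚ⁽²⁾(0) = (Φₚ⁽²⁾)'(0) = 0`. -/
theorem statement12 :
    (∀ y : ℝ,
      deriv (deriv (fun y : ℝ => Phi_p2 (y / Real.sqrt 2))) y
        + 2 * (3 * (sech (y / Real.sqrt 2)) ^ 2 - 1) * Phi_p2 (y / Real.sqrt 2) = y ^ 2) ∧
    Phi_p2 0 = 0 ∧ deriv Phi_p2 0 = 0 := by
  refine ⟨fun y => ?_, by simp [Phi_p2_eq], by simp [(hasDerivAt_Phi_p2 0).deriv]⟩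
  have hsq : (Real.sqrt 2)⁻¹ ^ 2 = 1 / 2 := by norm_num
  have hrescaled := (isLinearODESolution_Phi_p2.comp_mul_left (Real.sqrt 2)⁻¹).deriv_deriv_add_mul y
  simp only [hsq, sechPotential, inv_mul_eq_div] at hrescaled
  linear_combination hrescaled + 2 * y ^ 2 * hsq
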